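/- Let G be a reachability game. If REACH has a winning symbolic reachability strategy from a state s, then REACH has a winning (concrete) reachability strategy from s. -/

import Mathlib

universe u

/-- A reachability game over a state type `S`. States with `isReach s` are
controlled by player REACH, the others by player SAFE. -/
structure Game (S : Type u) where
  isReach : S → Prop
  Safe : S → S → Prop
  Reach : S → S → Prop
  Init : Set S
  Goal : Set S
  safe_src : ∀ s s', Safe s s' → ¬ isReach s
  reach_src : ∀ s s', Reach s s' → isReach s

namespace Game

variable {S : Type u}

/-- The edge relation `E = Safe ∪ Reach`. -/
def E (G : Game S) (s s' : S) : Prop := G.Safe s s' ∨ G.Reach s s'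

/-- A trap state has no outgoing `E`-transition. -/
def Trap (G : Game S) (s : S) : Prop := ∀ s', ¬ G.E s s'

/-- A play: an `E`-path which is infinite (`len = ⊤`) or finite
(`len = n`) and then ends in a trap state. Values of `seq` beyond a finite
length are irrelevant. -/
structure Play (G : Game S) where
  seq : ℕ → S
  len : ℕ∞
  step : ∀ i : ℕ, (i : ℕ∞) < len → G.E (seq i) (seq (i + 1))
  fin_trap : ∀ n : ℕ, len = (n : ℕ∞) → G.Trap (seq n)

/-- REACH wins a play if some state of the play is a goal state. -/
def ReachWinsPlay (G : Game S) (p : G.Play) : Prop :=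
  ∃ k : ℕ, (k : ℕ∞) ≤ p.len ∧ p.seq k ∈ G.Goal

/-- SAFE wins a play iff REACH does not. -/
def SafeWinsPlay (G : Game S) (p : G.Play) : Prop := ¬ G.ReachWinsPlay p

/-- The list `[f 0, …, f (n-1)]`. -/
def listPrefix (f : ℕ → S) (n : ℕ) : List S := (List.range n).map f

/-- A reachability strategy: on any nonempty sequence ending in a non-trap
REACH state it chooses a `Reach`-successor. -/
def IsReachStrategy (G : Game S) (σ : List S → S) : Prop :=
  ∀ (ω : List S) (s : S), G.isReach s → ¬ G.Trap s → G.Reach s (σ (ω ++ [s]))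

/-- A safety strategy: on any nonempty sequence ending in a non-trap SAFE
state it chooses a `Safe`-successor. -/
def IsSafeStrategy (G : Game S) (σ : List S → S) : Prop :=
  ∀ (ω : List S) (s : S), ¬ G.isReach s → ¬ G.Trap s → G.Safe s (σ (ω ++ [s]))

/-- Consistency of a play with a reachability strategy. -/
def ConsistentR (G : Game S) (σ : List S → S) (p : G.Play) : Prop :=
  ∀ i : ℕ, (i : ℕ∞) < p.len → G.isReach (p.seq i) →
    p.seq (i + 1) = σ (listPrefix p.seq (i + 1))

/-- Consistency of a play with a safety strategy. -/
def ConsistentS (G : Game S) (σ : List S → S) (p : G.Play) : Prop :=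
  ∀ i : ℕ, (i : ℕ∞) < p.len → ¬ G.isReach (p.seq i) →
    p.seq (i + 1) = σ (listPrefix p.seq (i + 1))

/-- `σ` is a reachability strategy winning from `s`. -/
def WinningReachStrategyFrom (G : Game S) (σ : List S → S) (s : S) : Prop :=
  G.IsReachStrategy σ ∧
    ∀ p : G.Play, p.seq 0 = s → G.ConsistentR σ p → G.ReachWinsPlay p

/-- `σ` is a safety strategy winning from `s`. -/
def WinningSafeStrategyFrom (G : Game S) (σ : List S → S) (s : S) : Prop :=
  G.IsSafeStrategy σ ∧
    ∀ p : G.Play, p.seq 0 = s → G.ConsistentS σ p → G.SafeWinsPlay p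

/-- REACH wins from `s`. -/
def ReachWinsFrom (G : Game S) (s : S) : Prop :=
  ∃ σ : List S → S, G.WinningReachStrategyFrom σ s

/-- SAFE wins from `s`. -/
def SafeWinsFrom (G : Game S) (s : S) : Prop :=
  ∃ σ : List S → S, G.WinningSafeStrategyFrom σ s

/-- Sources of a transition predicate. -/
def Pre (T : S → S → Prop) : Set S := {s | ∃ s', T s s'}

/-- Targets of a transition predicate. -/
def Post (T : S → S → Prop) : Set S := {s' | ∃ s, T s s'}

/-- Enforceable transitions of `T` in `G`. -/
def Enf (G : Game S) (T : S → S → Prop) (s s' : S) : Prop :=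
  G.E s s' ∧ T s s' ∧ ∀ s'', G.Safe s s'' → T s s''

/-- `C` is a necessary subgoal: every play of `G` (from `Init`) reaching
`Goal` at index `n` crosses `C` at some index `k < n`. -/
def NecessarySubgoal (G : Game S) (C : S → S → Prop) : Prop :=
  ∀ p : G.Play, p.seq 0 ∈ G.Init →
    ∀ n : ℕ, (n : ℕ∞) ≤ p.len → p.seq n ∈ G.Goal →
      ∃ k < n, C (p.seq k) (p.seq (k + 1))

/-- `ρ 0 … ρ n` is a play prefix: an `E`-path avoiding `Goal` whose last
state is not a trap state. -/
def IsPlayPrefix (G : Game S) (ρ : ℕ → S) (n : ℕ) : Prop :=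
  (∀ i < n, G.E (ρ i) (ρ (i + 1))) ∧ (∀ j ≤ n, ρ j ∉ G.Goal) ∧ ¬ G.Trap (ρ n)

/-- Conformance of a play prefix with a symbolic reachability strategy. -/
def PrefixConformsR (G : Game S) (𝔖 : S → S → Prop) (ρ : ℕ → S) (n : ℕ) : Prop :=
  ∀ j < n, G.isReach (ρ j) → 𝔖 (ρ j) (ρ (j + 1))

/-- Conformance of a play prefix with a symbolic safety strategy. -/
def PrefixConformsS (G : Game S) (𝔖 : S → S → Prop) (ρ : ℕ → S) (n : ℕ) : Prop :=
  ∀ j < n, ¬ G.isReach (ρ j) → 𝔖 (ρ j) (ρ (j + 1))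

/-- A play conforms to a symbolic reachability strategy if all its play
prefixes do. -/
def PlayConformsR (G : Game S) (𝔖 : S → S → Prop) (p : G.Play) : Prop :=
  ∀ n : ℕ, (n : ℕ∞) ≤ p.len → G.IsPlayPrefix p.seq n → G.PrefixConformsR 𝔖 p.seq n

/-- A play conforms to a symbolic safety strategy if all its play
prefixes do. -/
def PlayConformsS (G : Game S) (𝔖 : S → S → Prop) (p : G.Play) : Prop :=
  ∀ n : ℕ, (n : ℕ∞) ≤ p.len → G.IsPlayPrefix p.seq n → G.PrefixConformsS 𝔖 p.seq n

/-- `𝔖` is a winning symbolic reachability strategy from `s`. -/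
def WinningSymbolicReachFrom (G : Game S) (𝔖 : S → S → Prop) (s : S) : Prop :=
  (∀ a b, 𝔖 a b → G.E a b) ∧
  (∀ p : G.Play, p.seq 0 = s → G.PlayConformsR 𝔖 p → G.ReachWinsPlay p) ∧
  (∀ (ρ : ℕ → S) (n : ℕ), ρ 0 = s → G.IsPlayPrefix ρ n → G.PrefixConformsR 𝔖 ρ n →
      G.isReach (ρ n) → ∃ s', 𝔖 (ρ n) s' ∧ G.Reach (ρ n) s')

/-- `𝔖` is a winning symbolic safety strategy from `s`. -/
def WinningSymbolicSafeFrom (G : Game S) (𝔖 : S → S → Prop) (s : S) : Prop :=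
  (∀ a b, 𝔖 a b → G.E a b) ∧
  (∀ p : G.Play, p.seq 0 = s → G.PlayConformsS 𝔖 p → G.SafeWinsPlay p) ∧
  (∀ (ρ : ℕ → S) (n : ℕ), ρ 0 = s → G.IsPlayPrefix ρ n → G.PrefixConformsS 𝔖 ρ n →
      ¬ G.isReach (ρ n) → ∃ s', 𝔖 (ρ n) s' ∧ G.Safe (ρ n) s')

/-- Bisimulations on `G`. -/
def IsBisimulation (G : Game S) (R : S → S → Prop) : Prop :=
  ∀ s1 s2, R s1 s2 →
    ((s1 ∈ G.Goal ↔ s2 ∈ G.Goal) ∧ (s1 ∈ G.Init ↔ s2 ∈ G.Init) ∧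
      (G.isReach s1 ↔ G.isReach s2)) ∧
    (∀ s1', G.E s1 s1' → ∃ s2', G.E s2 s2' ∧ R s1' s2') ∧
    (∀ s2', G.E s2 s2' → ∃ s1', G.E s1 s1' ∧ R s1' s2')

/-- The pre-game `⟨Init, Safe ∖ F, Reach ∖ F, Pre(Enf(F, G))⟩`. -/
def preGame (G : Game S) (F : S → S → Prop) : Game S where
  isReach := G.isReach
  Safe := fun a b => G.Safe a b ∧ ¬ F a b
  Reach := fun a b => G.Reach a b ∧ ¬ F a b
  Init := G.Init
  Goal := Pre (G.Enf F)
  safe_src := fun a b h => G.safe_src a b h.1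
  reach_src := fun a b h => G.reach_src a b h.1

/-- The post-game: transitions restricted to sources in `φ`. -/
def postGame (G : Game S) (φ : Set S) : Game S where
  isReach := G.isReach
  Safe := fun a b => G.Safe a b ∧ a ∈ φ
  Reach := fun a b => G.Reach a b ∧ a ∈ φ
  Init := G.Init
  Goal := G.Goal
  safe_src := fun a b h => G.safe_src a b h.1
  reach_src := fun a b h => G.reach_src a b h.1

end Game

/-! A strategy of REACH need only obey `𝔖` at the states reached by conforming play prefixes, where
`𝔖` is known to offer a move. By induction along a play consistent with it, every play prefix then
conforms to `𝔖`, so REACH wins. Choosing, at each state, an `𝔖`-successor if there is one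
and any successor otherwise gives such a strategy, which looks only at the current state. -/

namespace Game

section Follows

variable {S : Type u} {G : Game S} {𝔖 : S → S → Prop} {σ : List S → S} {s : S}

/-- The concrete strategy `σ` follows the symbolic strategy `𝔖` from `s`: after every play prefix
from `s` that conforms to `𝔖` and ends in a REACH state, `σ` chooses a move of `𝔖`. Nothing is asked
of `σ` after other histories. -/
def FollowsFrom (G : Game S) (σ : List S → S) (𝔖 : S → S → Prop) (s : S) : Prop :=
  ∀ (ρ : ℕ → S) (n : ℕ), ρ 0 = s → G.IsPlayPrefix ρ n → G.PrefixConformsR 𝔖 ρ n →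
    G.isReach (ρ n) → 𝔖 (ρ n) (σ (listPrefix ρ (n + 1)))

theorem IsPlayPrefix.of_lt {ρ : ℕ → S} {m n : ℕ} (h : G.IsPlayPrefix ρ n) (hmn : m < n) :
    G.IsPlayPrefix ρ m := by
  obtain ⟨hstep, hgoal, -⟩ := h
  exact ⟨fun i hi => hstep i (hi.trans hmn), fun j hj => hgoal j (hj.trans hmn.le),
    fun htrap => htrap _ (hstep m hmn)⟩

theorem ConsistentR.playConformsR {p : G.Play} (hp : G.ConsistentR σ p)
    (hσ : G.FollowsFrom σ 𝔖 (p.seq 0)) : G.PlayConformsR 𝔖 p := by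
  intro n hn hprefix j
  induction j using Nat.strong_induction_on with
  | _ j ih =>
    intro hj hreach
    have hconf : G.PrefixConformsR 𝔖 p.seq j := fun i hi => ih i hi (hi.trans hj)
    have hlen : (j : ℕ∞) < p.len := (Nat.cast_lt.mpr hj).trans_le hn
    rw [hp j hlen hreach]
    exact hσ p.seq j rfl (hprefix.of_lt hj) hconf hreach

theorem WinningSymbolicReachFrom.winningReachStrategyFrom
    (h : G.WinningSymbolicReachFrom 𝔖 s) (hσ : G.IsReachStrategy σ)
    (hfollows : G.FollowsFrom σ 𝔖 s) : G.WinningReachStrategyFrom σ s := by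
  refine ⟨hσ, ?_⟩
  rintro p rfl hp
  exact h.2.1 p rfl (hp.playConformsR hfollows)

end Follows

section Positional

variable {S : Type u}

/-- The positional (memoryless) strategy that moves from each state `t` to `f t`. The state `d` only
serves to give a value at the empty history, which never arises. -/
def positional (d : S) (f : S → S) (ω : List S) : S := f (ω.getLastD d)

@[simp]
theorem positional_concat (d : S) (f : S → S) (ω : List S) (t : S) :
    positional d f (ω ++ [t]) = f t := by
  simp [positional]

theorem listPrefix_succ (ρ : ℕ → S) (n : ℕ) :
    listPrefix ρ (n + 1) = listPrefix ρ n ++ [ρ n] := by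
  simp [listPrefix, List.range_succ]

theorem isReachStrategy_positional {G : Game S} {d : S} {f : S → S} :
    G.IsReachStrategy (positional d f) ↔
      ∀ t, G.isReach t → ¬ G.Trap t → G.Reach t (f t) := by
  simp [IsReachStrategy]

theorem followsFrom_positional {G : Game S} {𝔖 : S → S → Prop} {d s : S} {f : S → S} :
    G.FollowsFrom (positional d f) 𝔖 s ↔
      ∀ (ρ : ℕ → S) (n : ℕ), ρ 0 = s → G.IsPlayPrefix ρ n → G.PrefixConformsR 𝔖 ρ n →
        G.isReach (ρ n) → 𝔖 (ρ n) (f (ρ n)) := by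
  simp only [FollowsFrom, listPrefix_succ, positional_concat]

end Positional

section Successor

variable {S : Type u} {G : Game S} {t : S}

theorem exists_reach_of_not_trap (ht : G.isReach t) (htrap : ¬ G.Trap t) :
    ∃ t', G.Reach t t' := by
  simp only [Trap, not_forall, not_not] at htrap
  obtain ⟨t', hsafe | hreach⟩ := htrap
  · exact absurd ht (G.safe_src t t' hsafe)
  · exact ⟨t', hreach⟩

theorem exists_reach_preferring (𝔖 : S → S → Prop) (ht : G.isReach t) (htrap : ¬ G.Trap t) :
    ∃ t', G.Reach t t' ∧ ((∃ a, 𝔖 t a ∧ G.Reach t a) → 𝔖 t t') := by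
  by_cases h𝔖 : ∃ a, 𝔖 t a ∧ G.Reach t a
  · obtain ⟨a, ha, hreach⟩ := h𝔖
    exact ⟨a, hreach, fun _ => ha⟩
  · obtain ⟨t', hreach⟩ := exists_reach_of_not_trap ht htrap
    exact ⟨t', hreach, fun h => absurd h h𝔖⟩

end Successor

end Game

theorem reach_wins_of_winning_symbolic_general {S : Type u} (G : Game S)
    (𝔖 : S → S → Prop) (s : S) (h : G.WinningSymbolicReachFrom 𝔖 s) :
    ∃ f : S → S, G.WinningReachStrategyFrom (Game.positional s f) s := by
  have : Nonempty S := ⟨s⟩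
  choose! f hreach hprefer using fun t => Game.exists_reach_preferring (G := G) (t := t) 𝔖
  refine ⟨f, h.winningReachStrategyFrom (Game.isReachStrategy_positional.mpr hreach)
    (Game.followsFrom_positional.mpr fun ρ n hρ hprefix hconf hn => ?_)⟩
  exact hprefer (ρ n) hn hprefix.2.2 (h.2.2 ρ n hρ hprefix hconf hn)

/-- a winning symbolic reachability strategy from `s` yields a
winning concrete reachability strategy from `s`. -/
theorem reach_wins_of_winning_symbolic {S : Type u} (G : Game S)
    (𝔖 : S → S → Prop) (s : S) (h : G.WinningSymbolicReachFrom 𝔖 s) :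
    G.ReachWinsFrom s := by
  obtain ⟨f, hf⟩ := reach_wins_of_winning_symbolic_general G 𝔖 s h
  exact ⟨_, hf⟩
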